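/- arXiv:2402.02538 — 2 statements merged into one kernel-verified Lean document; each statement's English description precedes it below -/
import Mathlib

section
/- For every integer n ≥ 1, the number of non-decreasing vacillating parking functions of length n is given by the closed formula |VPF_n^↑| = ((1 + √2)^n + (1 − √2)^n)/2, where the right-hand side is computed in the real numbers. -/
/-- One car with (1-indexed) preference `p` attempts to park on a one-way street with
spots `1,…,n` under the `k`-vacillating rule, given the set `occ` of occupied spots:
it parks in spot `p` if unoccupied; otherwise in spot `p - k` if `p - k ≥ 1` and it is
unoccupied; otherwise in spot `p + k` if `p + k ≤ n` and it is unoccupied; otherwise it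
fails to park (`none`). -/
def parkStep (n k : ℕ) (occ : Finset ℕ) (p : ℕ) : Option ℕ :=
  if p ∉ occ then some p
  else if k < p ∧ p - k ∉ occ then some (p - k)
  else if p + k ≤ n ∧ p + k ∉ occ then some (p + k)
  else none

/-- Park the cars whose preference list is given, in order, under the `k`-vacillating
rule on a street with spots `1,…,n`, starting from occupied set `occ`.  Returns the list
of spots occupied by the cars (in the order the cars arrive), or `none` if some car
fails to park. -/
def parkAssign (n k : ℕ) (occ : Finset ℕ) : List ℕ → Option (List ℕ)
  | [] => some []
  | p :: ps =>
    match parkStep n k occ p with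
    | none => none
    | some s => (parkAssign n k (insert s occ) ps).map (s :: ·)

/-- The 1-indexed preference list in `[n]^m` associated to `α : Fin m → Fin n`
(car `i+1` prefers spot `α i + 1`). -/
def prefList {m n : ℕ} (α : Fin m → Fin n) : List ℕ :=
  List.ofFn fun i => (α i : ℕ) + 1

/-- The set of `k`-vacillating parking functions of length `n`:
preference lists in `[n]^n` (encoded as `Fin n → Fin n`) for which all `n` cars park. -/
def VPFk (n k : ℕ) : Finset (Fin n → Fin n) :=
  Finset.univ.filter fun α => (parkAssign n k ∅ (prefList α)).isSome

/-- The set of vacillating parking functions of length `n` (the case `k = 1`). -/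
def VPF (n : ℕ) : Finset (Fin n → Fin n) := VPFk n 1

/-- The set of non-decreasing vacillating parking functions of length `n`. -/
def VPFup (n : ℕ) : Finset (Fin n → Fin n) :=
  (VPF n).filter fun α => ∀ i j : Fin n, i ≤ j → α i ≤ α j

/-!
Suppose that non-decreasing preferences fill the street, and look at a moment at which the
occupied spots are exactly `1, …, m` with `m < n`. The next car prefers `m` or `m + 1` and parks
in `m + 1`, or it prefers and takes `m + 2`. In the latter case the hole at `m + 1` is out of reach
of preferences above `m + 2`, so by monotonicity the car after it must prefer `m + 2` as well and
fills the hole. Hence the number of ways to go on from `m` satisfies the Pell recurrence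
`c m = 2 * c (m + 1) + c (m + 2)`, except at `m = 0`, where the preference `m` is not available
and `c 0 = c 1 + c 2`.
-/

section Parking

variable {n k p s : ℕ} {occ : Finset ℕ} {l : List ℕ}

lemma isSome_parkAssign_cons :
    (parkAssign n k occ (p :: l)).isSome ↔
      ∃ s ∈ parkStep n k occ p, (parkAssign n k (insert s occ) l).isSome := by
  cases h : parkStep n k occ p <;> simp [parkAssign, h]

lemma notMem_of_mem_parkStep (h : s ∈ parkStep n k occ p) : s ∉ occ := by
  unfold parkStep at h
  grind

lemma le_add_of_mem_parkStep (h : s ∈ parkStep n k occ p) : p ≤ s + k := by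
  unfold parkStep at h
  grind

lemma le_of_mem_parkStep (hp : p ≤ n) (h : s ∈ parkStep n k occ p) : s ≤ n := by
  unfold parkStep at h
  grind

lemma card_add_length_le_of_isSome_parkAssign {S : Finset ℕ} (hocc : occ ⊆ S)
    (hS : ∀ p ∈ l, ∀ occ, ∀ s ∈ parkStep n k occ p, s ∈ S)
    (hpark : (parkAssign n k occ l).isSome) : occ.card + l.length ≤ S.card := by
  induction l generalizing occ with
  | nil => simpa using Finset.card_le_card hocc
  | cons p l ih =>
    obtain ⟨s, hs, hpark⟩ := isSome_parkAssign_cons.1 hpark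
    have hsS : s ∈ S := hS p List.mem_cons_self occ s hs
    have hle := ih (Finset.insert_subset hsS hocc)
      (fun q hq => hS q (List.mem_cons_of_mem p hq)) hpark
    rw [Finset.card_insert_of_notMem (notMem_of_mem_parkStep hs)] at hle
    rw [List.length_cons]
    lia

/-- Otherwise every car of `l` parks to the right of the free spot `s`, so too few spots remain. -/
lemma exists_le_add_of_isSome_parkAssign (hocc : occ ⊆ Finset.Icc 1 n)
    (hs : s ∈ Finset.Icc 1 n) (hfree : s ∉ occ) (hl : ∀ p ∈ l, p ≤ n)
    (hcard : n ≤ occ.card + l.length) (hpark : (parkAssign n k occ l).isSome) :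
    ∃ p ∈ l, p ≤ s + k := by
  by_contra! hfar
  have hle := card_add_length_le_of_isSome_parkAssign (S := (Finset.Icc 1 n).erase s)
    (Finset.subset_erase.2 ⟨hocc, hfree⟩)
    (fun p hp occ t ht => by
      have hpt := le_add_of_mem_parkStep ht
      have htn := le_of_mem_parkStep (hl p hp) ht
      have hsp := hfar p hp
      rw [Finset.mem_erase, Finset.mem_Icc]
      lia) hpark
  rw [Finset.card_erase_of_mem hs, Nat.card_Icc] at hle
  rw [Finset.mem_Icc] at hs
  lia

end Parking

section InitialSegment

variable {n m p : ℕ}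

lemma insert_succ_Icc_one (m : ℕ) :
    insert (m + 1) (Finset.Icc 1 m) = Finset.Icc 1 (m + 1) :=
  Finset.insert_Icc_right_eq_Icc_add_one (by lia)

lemma parkStep_Icc_one_of_lt (hp : 1 ≤ p) (hpm : p < m) :
    parkStep n 1 (Finset.Icc 1 m) p = none := by
  simp only [parkStep, Finset.mem_Icc]
  grind

lemma parkStep_Icc_one_of_le_succ (hmn : m < n) (hp : 1 ≤ p) (hmp : m ≤ p) (hpm : p ≤ m + 1) :
    parkStep n 1 (Finset.Icc 1 m) p = some (m + 1) := by
  simp only [parkStep, Finset.mem_Icc]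
  grind

lemma parkStep_Icc_one_add_two : parkStep n 1 (Finset.Icc 1 m) (m + 2) = some (m + 2) := by
  simp [parkStep]

lemma parkStep_insert_add_two_Icc_one :
    parkStep n 1 (insert (m + 2) (Finset.Icc 1 m)) (m + 2) = some (m + 1) := by
  simp [parkStep]

end InitialSegment

/-- `l` is a non-decreasing list of preferences in `1, …, n` with which `n - m` cars fill the
street `1, …, n` under the vacillating rule once the spots `1, …, m` are occupied. -/
structure IsSortedCompletion (n m : ℕ) (l : List ℕ) : Prop where
  add_length : m + l.length = n
  pairwise : l.Pairwise (· ≤ ·)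
  bounds : ∀ p ∈ l, 1 ≤ p ∧ p ≤ n
  isSome : (parkAssign n 1 (Finset.Icc 1 m) l).isSome

section SortedCompletion

variable {n m q : ℕ} {t : List ℕ}

lemma isSortedCompletion_nil : IsSortedCompletion n m [] ↔ m = n :=
  ⟨fun h => by simpa using h.add_length, fun h => ⟨by simpa using h, by simp, by simp, rfl⟩⟩

lemma IsSortedCompletion.head_bounds (h : IsSortedCompletion n m (q :: t)) :
    m ≤ q ∧ q ≤ m + 2 := by
  have hmn : m + (t.length + 1) = n := h.add_length
  constructor
  · obtain ⟨s, hs, -⟩ := isSome_parkAssign_cons.1 h.isSome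
    by_contra! hlt
    rw [parkStep_Icc_one_of_lt (h.bounds q List.mem_cons_self).1 hlt] at hs
    cases hs
  · obtain ⟨p, hp, hpm⟩ := exists_le_add_of_isSome_parkAssign (s := m + 1)
      (Finset.Icc_subset_Icc_right (by lia)) (Finset.mem_Icc.2 ⟨by lia, by lia⟩) (by simp)
      (fun p hp => (h.bounds p hp).2) (by rw [Nat.card_Icc, List.length_cons]; lia) h.isSome
    rcases List.mem_cons.1 hp with rfl | hp
    · exact hpm
    · exact ((List.pairwise_cons.1 h.pairwise).1 p hp).trans hpm

lemma IsSortedCompletion.le_of_mem {l : List ℕ} (h : IsSortedCompletion n m l) {p : ℕ}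
    (hp : p ∈ l) : m ≤ p := by
  cases l with
  | nil => cases hp
  | cons q t =>
    rcases List.mem_cons.1 hp with rfl | hp
    · exact h.head_bounds.1
    · exact h.head_bounds.1.trans ((List.pairwise_cons.1 h.pairwise).1 p hp)

lemma isSortedCompletion_cons_of_le_succ (hq : 1 ≤ q) (hmq : m ≤ q) (hqm : q ≤ m + 1) :
    IsSortedCompletion n m (q :: t) ↔ IsSortedCompletion n (m + 1) t := by
  have hpark (hmn : m < n) : (parkAssign n 1 (Finset.Icc 1 m) (q :: t)).isSome ↔
      (parkAssign n 1 (Finset.Icc 1 (m + 1)) t).isSome := by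
    simp [isSome_parkAssign_cons, parkStep_Icc_one_of_le_succ hmn hq hmq hqm,
      insert_succ_Icc_one]
  constructor
  · intro h
    have hmn : m + (t.length + 1) = n := h.add_length
    exact ⟨by lia, h.pairwise.of_cons, fun p hp => h.bounds p (List.mem_cons_of_mem q hp),
      (hpark (by lia)).1 h.isSome⟩
  · intro h
    have hmn : m + 1 + t.length = n := h.add_length
    exact ⟨by rw [List.length_cons]; lia,
      List.pairwise_cons.2 ⟨fun p hp => hqm.trans (h.le_of_mem hp), h.pairwise⟩,
      List.forall_mem_cons.2 ⟨⟨hq, by lia⟩, h.bounds⟩, (hpark (by lia)).2 h.isSome⟩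

lemma isSome_parkAssign_cons_cons_add_two {u : List ℕ} :
    (parkAssign n 1 (Finset.Icc 1 m) ((m + 2) :: (m + 2) :: u)).isSome ↔
      (parkAssign n 1 (Finset.Icc 1 (m + 2)) u).isSome := by
  simp [isSome_parkAssign_cons, parkStep_Icc_one_add_two, parkStep_insert_add_two_Icc_one,
    Finset.insert_comm (m + 1) (m + 2), insert_succ_Icc_one]

lemma IsSortedCompletion.exists_eq_cons_of_cons_add_two
    (h : IsSortedCompletion n m ((m + 2) :: t)) : ∃ u, t = (m + 2) :: u := by
  have hmn : m + (t.length + 1) = n := h.add_length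
  obtain ⟨⟨-, hm⟩, hmem⟩ := List.forall_mem_cons.1 h.bounds
  obtain ⟨hle, hsort⟩ := List.pairwise_cons.1 h.pairwise
  have hpark : (parkAssign n 1 (insert (m + 2) (Finset.Icc 1 m)) t).isSome := by
    simpa [isSome_parkAssign_cons, parkStep_Icc_one_add_two] using h.isSome
  obtain ⟨p, hp, hpm⟩ : ∃ p ∈ t, p ≤ m + 1 + 1 :=
    exists_le_add_of_isSome_parkAssign
      (Finset.insert_subset (Finset.mem_Icc.2 ⟨by lia, hm⟩)
        (Finset.Icc_subset_Icc_right (by lia)))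
      (Finset.mem_Icc.2 ⟨by lia, by lia⟩) (by simp) (fun p hp => (hmem p hp).2)
      (by rw [Finset.card_insert_of_notMem (by simp), Nat.card_Icc]; lia) hpark
  cases t with
  | nil => cases hp
  | cons r u =>
    have hrp : r ≤ p := by
      rcases List.mem_cons.1 hp with rfl | hp
      · exact le_rfl
      · exact (List.pairwise_cons.1 hsort).1 p hp
    exact ⟨u, by rw [(hrp.trans hpm).antisymm (hle r List.mem_cons_self)]⟩

lemma isSortedCompletion_cons_cons_add_two :
    IsSortedCompletion n m ((m + 2) :: (m + 2) :: t) ↔ IsSortedCompletion n (m + 2) t := by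
  constructor
  · intro h
    have hmn : m + (t.length + 2) = n := h.add_length
    exact ⟨by lia, h.pairwise.of_cons.of_cons,
      fun p hp => h.bounds p (List.mem_cons_of_mem _ (List.mem_cons_of_mem _ hp)),
      isSome_parkAssign_cons_cons_add_two.1 h.isSome⟩
  · intro h
    have hmn : m + 2 + t.length = n := h.add_length
    have hle : ∀ p ∈ t, m + 2 ≤ p := fun p hp => h.le_of_mem hp
    have hm : 1 ≤ m + 2 ∧ m + 2 ≤ n := by lia
    refine ⟨by simp only [List.length_cons]; lia, ?_,
      List.forall_mem_cons.2 ⟨hm, List.forall_mem_cons.2 ⟨hm, h.bounds⟩⟩,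
      isSome_parkAssign_cons_cons_add_two.2 h.isSome⟩
    exact List.pairwise_cons.2 ⟨List.forall_mem_cons.2 ⟨le_rfl, hle⟩,
      List.pairwise_cons.2 ⟨hle, h.pairwise⟩⟩

end SortedCompletion

section Counting

variable {n m : ℕ}

lemma setOf_isSortedCompletion_self : {l | IsSortedCompletion n n l} = {[]} := by
  ext l
  refine ⟨fun h => List.length_eq_zero_iff.1 (Nat.add_eq_left.1 h.add_length), ?_⟩
  rintro rfl
  exact isSortedCompletion_nil.2 rfl

lemma setOf_isSortedCompletion_of_lt (hnm : n < m) : {l | IsSortedCompletion n m l} = ∅ :=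
  Set.eq_empty_of_forall_notMem fun l h => by
    have hmn : m + l.length = n := h.add_length
    lia

lemma setOf_isSortedCompletion_eq_union (hmn : m < n) :
    {l | IsSortedCompletion n m l} =
      Set.image2 List.cons (Set.Icc (max 1 m) (m + 1)) {l | IsSortedCompletion n (m + 1) l} ∪
        (fun l => (m + 2) :: (m + 2) :: l) '' {l | IsSortedCompletion n (m + 2) l} := by
  ext l
  constructor
  · intro h
    cases l with
    | nil => exact absurd (isSortedCompletion_nil.1 h) hmn.ne
    | cons q t =>
      have hq := (h.bounds q List.mem_cons_self).1
      obtain ⟨hmq, hqm⟩ := h.head_bounds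
      rcases Nat.le_succ_iff.1 hqm with hqm | rfl
      · exact Or.inl ⟨q, ⟨max_le hq hmq, hqm⟩, t,
          (isSortedCompletion_cons_of_le_succ hq hmq hqm).1 h, rfl⟩
      · obtain ⟨u, rfl⟩ := h.exists_eq_cons_of_cons_add_two
        exact Or.inr ⟨u, isSortedCompletion_cons_cons_add_two.1 h, rfl⟩
  · rintro (⟨q, ⟨hq, hqm⟩, t, ht, rfl⟩ | ⟨u, hu, rfl⟩)
    · exact (isSortedCompletion_cons_of_le_succ (le_of_max_le_left hq) (le_of_max_le_right hq)
        hqm).2 ht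
    · exact isSortedCompletion_cons_cons_add_two.2 hu

lemma encard_image2_cons {α : Type*} (A : Set α) (B : Set (List α)) :
    (Set.image2 List.cons A B).encard = A.encard * B.encard := by
  have hinj : Function.Injective2 (List.cons (α := α)) := fun _ _ _ _ h => List.cons.inj h
  rw [← Set.image_uncurry_prod, hinj.uncurry.encard_image, Set.encard_prod]

lemma encard_setOf_isSortedCompletion (hmn : m < n) :
    {l | IsSortedCompletion n m l}.encard =
      (Set.Icc (max 1 m) (m + 1)).encard * {l | IsSortedCompletion n (m + 1) l}.encard +
        {l | IsSortedCompletion n (m + 2) l}.encard := by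
  have hdisj : Disjoint
      (Set.image2 List.cons (Set.Icc (max 1 m) (m + 1)) {l | IsSortedCompletion n (m + 1) l})
      ((fun l => (m + 2) :: (m + 2) :: l) '' {l | IsSortedCompletion n (m + 2) l}) := by
    rw [Set.disjoint_left]
    rintro _ ⟨q, ⟨-, hq⟩, t, -, rfl⟩ ⟨u, -, hu⟩
    have := (List.cons.inj hu).1
    lia
  have hinj : Function.Injective fun l : List ℕ => (m + 2) :: (m + 2) :: l :=
    List.cons_injective.comp List.cons_injective
  rw [setOf_isSortedCompletion_eq_union hmn, Set.encard_union_eq hdisj, encard_image2_cons,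
    hinj.encard_image]

/-- The Pell numbers `0, 1, 2, 5, 12, …`, which count the non-decreasing completions of a
partially filled street. -/
def pellNumber : ℕ → ℕ
  | 0 => 0
  | 1 => 1
  | r + 2 => 2 * pellNumber (r + 1) + pellNumber r

lemma encard_setOf_isSortedCompletion_eq_pellNumber (hm : 1 ≤ m) {r : ℕ} (hr : m + r = n + 1) :
    {l | IsSortedCompletion n m l}.encard = pellNumber r := by
  induction r using Nat.twoStepInduction generalizing m with
  | zero => simp [setOf_isSortedCompletion_of_lt (show n < m by lia), pellNumber]
  | one =>
    obtain rfl : m = n := by lia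
    simp [setOf_isSortedCompletion_self, pellNumber]
  | more r ih₀ ih₁ =>
    have hIcc : (Set.Icc m (m + 1)).encard = 2 := by
      rw [← Finset.coe_Icc, Set.encard_coe_eq_coe_finsetCard, Nat.card_Icc]
      norm_num [add_assoc]
    rw [encard_setOf_isSortedCompletion (by lia), max_eq_right hm, hIcc,
      ih₁ (by lia) (by lia), ih₀ (by lia) (by lia), pellNumber]
    push_cast
    rfl

lemma encard_setOf_isSortedCompletion_zero (r : ℕ) :
    {l | IsSortedCompletion (r + 1) 0 l}.encard = pellNumber (r + 1) + pellNumber r := by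
  rw [encard_setOf_isSortedCompletion r.succ_pos,
    encard_setOf_isSortedCompletion_eq_pellNumber (r := r + 1) le_add_self (by lia),
    encard_setOf_isSortedCompletion_eq_pellNumber (r := r) le_add_self (by lia)]
  simp

lemma two_mul_sqrt_two_mul_pellNumber (r : ℕ) :
    2 * √2 * (pellNumber r : ℝ) = (1 + √2) ^ r - (1 - √2) ^ r := by
  have hsq : √2 ^ 2 = (2 : ℝ) := Real.sq_sqrt zero_le_two
  induction r using Nat.twoStepInduction with
  | zero => simp [pellNumber]
  | one => simp only [pellNumber]; push_cast; ring
  | more r ih₀ ih₁ =>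
    have hroot₁ : (1 + √2) ^ 2 = 2 * (1 + √2) + 1 := by linear_combination hsq
    have hroot₂ : (1 - √2) ^ 2 = 2 * (1 - √2) + 1 := by linear_combination hsq
    rw [pellNumber]
    push_cast
    linear_combination 2 * ih₁ + ih₀ - (1 + √2) ^ r * hroot₁ + (1 - √2) ^ r * hroot₂

lemma pellNumber_succ_add_pellNumber (r : ℕ) :
    (pellNumber (r + 1) + pellNumber r : ℝ) =
      ((1 + √2) ^ (r + 1) + (1 - √2) ^ (r + 1)) / 2 := by
  have hsq : √2 ^ 2 = (2 : ℝ) := Real.sq_sqrt zero_le_two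
  have hne : 2 * √2 ≠ 0 := by positivity
  apply mul_left_cancel₀ hne
  linear_combination two_mul_sqrt_two_mul_pellNumber (r + 1) +
    two_mul_sqrt_two_mul_pellNumber r - ((1 + √2) ^ r - (1 - √2) ^ r) * hsq

end Counting

section PrefList

variable {m n : ℕ}

lemma prefList_injective : Function.Injective (prefList : (Fin m → Fin n) → List ℕ) :=
  fun _ _ h => funext fun i =>
    Fin.ext (Nat.succ_injective (congrFun (List.ofFn_injective h) i))

lemma mem_range_prefList {l : List ℕ} :
    l ∈ Set.range (prefList : (Fin m → Fin n) → List ℕ) ↔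
      l.length = m ∧ ∀ p ∈ l, 1 ≤ p ∧ p ≤ n := by
  constructor
  · rintro ⟨α, rfl⟩
    exact ⟨List.length_ofFn, List.forall_mem_ofFn_iff.2 fun i => ⟨by lia, (α i).isLt⟩⟩
  · rintro ⟨rfl, hl⟩
    have hget (i : Fin l.length) : 1 ≤ l.get i ∧ l.get i ≤ n := hl _ (l.get_mem i)
    refine ⟨fun i => ⟨l.get i - 1, by have := hget i; lia⟩, ?_⟩
    conv_rhs => rw [← List.ofFn_get l]
    exact congrArg List.ofFn (funext fun i => Nat.sub_add_cancel (hget i).1)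

lemma pairwise_le_prefList {α : Fin m → Fin n} :
    (prefList α).Pairwise (· ≤ ·) ↔ Monotone α := by
  rw [prefList, ← List.sortedLE_iff_pairwise, List.sortedLE_ofFn_iff]
  simp [Monotone]

lemma isSortedCompletion_prefList {α : Fin n → Fin n} :
    IsSortedCompletion n 0 (prefList α) ↔ α ∈ VPFup n := by
  obtain ⟨hlen, hmem⟩ := mem_range_prefList.1 (Set.mem_range_self α)
  simp only [VPFup, VPF, VPFk, Finset.mem_filter, Finset.mem_univ, true_and]
  exact ⟨fun h => ⟨h.isSome, fun _ _ hij => pairwise_le_prefList.1 h.pairwise hij⟩,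
    fun h => ⟨by lia, pairwise_le_prefList.2 h.2, hmem, h.1⟩⟩

lemma image_prefList_VPFup (n : ℕ) :
    prefList '' (VPFup n : Set (Fin n → Fin n)) = {l | IsSortedCompletion n 0 l} := by
  ext l
  constructor
  · rintro ⟨α, hα, rfl⟩
    exact isSortedCompletion_prefList.2 hα
  · intro h
    obtain ⟨α, rfl⟩ := mem_range_prefList.2 ⟨by simpa using h.add_length, h.bounds⟩
    exact ⟨α, isSortedCompletion_prefList.1 h, rfl⟩

lemma card_VPFup_succ (r : ℕ) : (VPFup (r + 1)).card = pellNumber (r + 1) + pellNumber r := by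
  have h : ((VPFup (r + 1)).card : ℕ∞) = pellNumber (r + 1) + pellNumber r := by
    rw [← Set.encard_coe_eq_coe_finsetCard, ← prefList_injective.encard_image,
      image_prefList_VPFup, encard_setOf_isSortedCompletion_zero]
  exact_mod_cast h

end PrefList

/-- For every `n ≥ 1`,
`|VPF_n^↑| = ((1 + √2)^n + (1 − √2)^n)/2` in the real numbers. -/
theorem vpfup_card_closed_form (n : ℕ) (hn : 1 ≤ n) :
    ((VPFup n).card : ℝ) =
      ((1 + Real.sqrt 2) ^ n + (1 - Real.sqrt 2) ^ n) / 2 := by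
  obtain ⟨r, rfl⟩ := Nat.exists_eq_add_of_le' hn
  rw [card_VPFup_succ, Nat.cast_add, pellNumber_succ_add_pellNumber]
end

section
/- If β = (b_1,…,b_n) is a non-increasing vacillating parking function of length n (i.e., β ∈ VPF_n and b_1 ≥ b_2 ≥ ⋯ ≥ b_n), then n−i ≤ b_i ≤ n+2−i for all i ∈ [n]. -/
/-- The set of non-increasing vacillating parking functions of length `n`. -/
def VPFdown (n : ℕ) : Finset (Fin n → Fin n) :=
  (VPF n).filter fun α => ∀ i j : Fin n, i ≤ j → α j ≤ α i

/-!
Only two features of the parking rule matter: the cars occupy distinct spots of `[n]`, and each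
parks at distance at most `k` from its preference. If the preferences are non-increasing, then
car `i` and all later ones lie in `[1, b_i + k]`, while car `i` and all earlier ones lie in
`[b_i - k, n]`. Counting the cars in each interval gives the two bounds.
-/

section Parking

variable {n k p s : ℕ} {occ : Finset ℕ} {ps ss : List ℕ}

theorem parkStep_notMem (h : parkStep n k occ p = some s) : s ∉ occ := by
  unfold parkStep at h
  split_ifs at h with hpref hleft hright <;> obtain rfl := Option.some.inj h
  exacts [hleft.2, hright.2, hpref]

theorem parkStep_mem_Icc (hp : p ∈ Finset.Icc 1 n) (h : parkStep n k occ p = some s) :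
    s ∈ Finset.Icc 1 n := by
  rw [Finset.mem_Icc] at hp ⊢
  unfold parkStep at h
  split_ifs at h <;> obtain rfl := Option.some.inj h <;> omega

theorem parkStep_near (h : parkStep n k occ p = some s) : s ≤ p + k ∧ p ≤ s + k := by
  unfold parkStep at h
  split_ifs at h <;> obtain rfl := Option.some.inj h <;> omega

theorem parkAssign_cons_eq_some_iff :
    parkAssign n k occ (p :: ps) = some ss ↔
      ∃ s ts, parkStep n k occ p = some s ∧
        parkAssign n k (insert s occ) ps = some ts ∧ s :: ts = ss := by
  rw [parkAssign]
  cases parkStep n k occ p <;> simp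

theorem parkAssign_notMem (h : parkAssign n k occ ps = some ss) : ∀ s ∈ ss, s ∉ occ := by
  induction ps generalizing occ ss with
  | nil =>
    obtain rfl := Option.some.inj h
    simp
  | cons p ps ih =>
    obtain ⟨s, ts, hs, hts, rfl⟩ := parkAssign_cons_eq_some_iff.1 h
    exact List.forall_mem_cons.2
      ⟨parkStep_notMem hs, fun t ht hocc => ih hts t ht (Finset.mem_insert_of_mem hocc)⟩

theorem parkAssign_nodup (h : parkAssign n k occ ps = some ss) : ss.Nodup := by
  induction ps generalizing occ ss with
  | nil =>
    obtain rfl := Option.some.inj h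
    exact List.nodup_nil
  | cons p ps ih =>
    obtain ⟨s, ts, -, hts, rfl⟩ := parkAssign_cons_eq_some_iff.1 h
    exact List.nodup_cons.2
      ⟨fun hmem => parkAssign_notMem hts s hmem (Finset.mem_insert_self s occ), ih hts⟩

theorem parkAssign_forall₂_parkStep (h : parkAssign n k occ ps = some ss) :
    List.Forall₂ (fun p s => ∃ occ', parkStep n k occ' p = some s) ps ss := by
  induction ps generalizing occ ss with
  | nil =>
    obtain rfl := Option.some.inj h
    exact .nil
  | cons p ps ih =>
    obtain ⟨s, ts, hs, hts, rfl⟩ := parkAssign_cons_eq_some_iff.1 h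
    exact .cons ⟨occ, hs⟩ (ih hts)

theorem exists_injective_parkStep {m : ℕ} {β : Fin m → Fin n}
    (h : (parkAssign n k occ (prefList β)).isSome) :
    ∃ f : Fin m → ℕ, Function.Injective f ∧
      ∀ i, ∃ occ', parkStep n k occ' ((β i : ℕ) + 1) = some (f i) := by
  obtain ⟨ss, hss⟩ := Option.isSome_iff_exists.1 h
  obtain ⟨hlen, hget⟩ := List.forall₂_iff_get.1 (parkAssign_forall₂_parkStep hss)
  have hm : m = ss.length := by rw [← hlen, prefList, List.length_ofFn]
  refine ⟨ss.get ∘ Fin.cast hm,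
    (List.nodup_iff_injective_get.1 (parkAssign_nodup hss)).comp (Fin.cast_injective hm),
    fun i => ?_⟩
  have hi := hget i (hlen ▸ hm ▸ i.isLt) (hm ▸ i.isLt)
  simp only [prefList, List.get_ofFn] at hi
  exact hi

end Parking

section Counting

variable {ι : Type*} [Preorder ι] {b f : ι → ℕ} {k : ℕ}

theorem card_Ici_le_add_of_antitone [LocallyFiniteOrderTop ι] (hb : Antitone b)
    (hinj : Function.Injective f) (hpos : ∀ j, 1 ≤ f j) (hnear : ∀ j, f j ≤ b j + k) (i : ι) :
    (Finset.Ici i).card ≤ b i + k := by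
  have hmaps : Set.MapsTo f (Finset.Ici i) (Finset.Icc 1 (b i + k)) := fun j hj =>
    Finset.mem_Icc.2 ⟨hpos j,
      (hnear j).trans (Nat.add_le_add_right (hb (Finset.mem_Ici.1 hj)) k)⟩
  simpa using Finset.card_le_card_of_injOn f hmaps hinj.injOn

theorem add_card_Iic_le_of_antitone [LocallyFiniteOrderBot ι] {n : ℕ} (hb : Antitone b)
    (hinj : Function.Injective f) (hle : ∀ j, f j ≤ n) (hnear : ∀ j, b j ≤ f j + k) (i : ι) :
    b i + (Finset.Iic i).card ≤ n + k + 1 := by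
  have hmaps : Set.MapsTo f (Finset.Iic i) (Finset.Icc (b i - k) n) := fun j hj =>
    Finset.mem_Icc.2 ⟨Nat.sub_le_of_le_add ((hb (Finset.mem_Iic.1 hj)).trans (hnear j)), hle j⟩
  have hcard := Finset.card_le_card_of_injOn f hmaps hinj.injOn
  rw [Nat.card_Icc] at hcard
  have hbi : b i ≤ n + k := (hnear i).trans (Nat.add_le_add_right (hle i) k)
  omega

end Counting

theorem nonincreasing_vpf_bounds_general {m n k : ℕ} {β : Fin m → Fin n} {occ : Finset ℕ}
    (hβ : (parkAssign n k occ (prefList β)).isSome) (hanti : Antitone β) (i : Fin m) :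
    m + 1 ≤ ((β i : ℕ) + 1) + ((i : ℕ) + 1) + k ∧
      ((β i : ℕ) + 1) + ((i : ℕ) + 1) ≤ n + k + 1 := by
  obtain ⟨f, hinj, hf⟩ := exists_injective_parkStep hβ
  choose occ' hstep using hf
  have hmem (j) : 1 ≤ f j ∧ f j ≤ n :=
    Finset.mem_Icc.1 <| parkStep_mem_Icc (Finset.mem_Icc.2 ⟨by omega, by omega⟩) (hstep j)
  have hpref : Antitone fun j => (β j : ℕ) + 1 := fun _ _ h => Nat.succ_le_succ (hanti h)
  have hlower := card_Ici_le_add_of_antitone hpref hinj (fun j => (hmem j).1)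
    (fun j => (parkStep_near (hstep j)).1) i
  have hupper := add_card_Iic_le_of_antitone hpref hinj (fun j => (hmem j).2)
    (fun j => (parkStep_near (hstep j)).2) i
  rw [Fin.card_Ici] at hlower
  rw [Fin.card_Iic] at hupper
  exact ⟨by omega, hupper⟩

/-- If `β` is a non-increasing vacillating parking function of
length `n`, then `n − i ≤ b_i ≤ n + 2 − i` for all `i ∈ [n]`.  Here car `i ∈ [n]`
corresponds to index `i - 1 : Fin n` with (1-indexed) preference `b_i = β (i-1) + 1`,
and the (subtraction-free) claim reads
`n ≤ b_i + i ∧ b_i + i ≤ n + 2` for `i : Fin n` (with `i` 1-indexed as `(i : ℕ) + 1`). -/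
theorem nonincreasing_vpf_bounds (n : ℕ) (β : Fin n → Fin n) (hβ : β ∈ VPF n)
    (hanti : ∀ i j : Fin n, i ≤ j → β j ≤ β i) :
    ∀ i : Fin n,
      n ≤ ((β i : ℕ) + 1) + ((i : ℕ) + 1) ∧
        ((β i : ℕ) + 1) + ((i : ℕ) + 1) ≤ n + 2 := by
  intro i
  have h := nonincreasing_vpf_bounds_general (Finset.mem_filter.1 hβ).2 hanti i
  exact ⟨Nat.le_of_succ_le_succ h.1, h.2⟩
end
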